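/- Let $\mu$ be a positive Borel measure on $\mathbb{B}_n$, let $p, q > 0$, $s > 0$, $\alpha > -1$, $t > 0$, and assume there is $C > 0$ such that $\sup_{a \in \mathbb{B}_n} \int_{\mathbb{B}_n} |f(z)|^q \frac{(1-|a|^2)^t}{|1-\langle z,a\rangle|^{s+t}} \, d\mu(z) \le C \|f\|_{p,\alpha}^q$ for all $f \in A^p_\alpha$. Then for every $t_1 > 0$, $\sup_{a \in \mathbb{B}_n} \int_{\mathbb{B}_n} \frac{(1-|a|^2)^{t+t_1}}{|1-\langle z,a\rangle|^{s + (n+1+\alpha)q/p + t + t_1}} d\mu(z) < \infty$. -/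

import Mathlib

open MeasureTheory

noncomputable section

abbrev Cn (n : ℕ) := EuclideanSpace ℂ (Fin n)


noncomputable instance (n : ℕ) : MeasurableSpace (Cn n) := borel _
instance (n : ℕ) : BorelSpace (Cn n) := ⟨rfl⟩
noncomputable instance (n : ℕ) : MeasureSpace (Cn n) := ⟨MeasureTheory.Measure.addHaar⟩

def B (n : ℕ) : Set (Cn n) := Metric.ball 0 1

def bdot {n : ℕ} (z w : Cn n) : ℂ := ∑ j, z j * (starRingEnd ℂ) (w j)

def vol (n : ℕ) (α : ℝ) : Measure (Cn n) :=
  (volume.restrict (B n)).withDensity fun z => ENNReal.ofReal ((1 - ‖z‖ ^ 2) ^ α)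

def Hol {n : ℕ} (f : Cn n → ℂ) : Prop := DifferentiableOn ℂ f (B n)

def bNorm (n : ℕ) (p α : ℝ) (f : Cn n → ℂ) : ℝ :=
  (∫ z, ‖f z‖ ^ p ∂(vol n α)) ^ (1 / p)

def InBergman (n : ℕ) (p α : ℝ) (f : Cn n → ℂ) : Prop :=
  Hol f ∧ Integrable (fun z => ‖f z‖ ^ p) (vol n α)

def rderiv {n : ℕ} (f : Cn n → ℂ) (z : Cn n) : ℂ := fderiv ℂ f z z

def mob {n : ℕ} (a z : Cn n) : ℝ :=
  (1 - ‖a‖ ^ 2) * (1 - ‖z‖ ^ 2) / ‖(1 : ℂ) - bdot z a‖ ^ 2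

def rho {n : ℕ} (z w : Cn n) : ℝ := Real.sqrt (1 - mob z w)

def bergDist {n : ℕ} (z w : Cn n) : ℝ :=
  (1 / 2) * Real.log ((1 + rho z w) / (1 - rho z w))

def bergBall {n : ℕ} (a : Cn n) (r : ℝ) : Set (Cn n) := {w ∈ B n | bergDist a w < r}

def IsCarleson (n : ℕ) (lam γ : ℝ) (μ : Measure (Cn n)) : Prop :=
  ∀ p q : ℝ, 0 < p → 0 < q → q / p = lam →
    ∃ C > 0, ∀ f : Cn n → ℂ, InBergman n p γ f →
      ∫ z, ‖f z‖ ^ q ∂μ ≤ C * bNorm n p γ f ^ q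

def blochSet (n : ℕ) (α : ℝ) (f : Cn n → ℂ) : Set ℝ :=
  {x | ∃ z ∈ B n, x = ‖rderiv f z‖ * (1 - ‖z‖ ^ 2) ^ α}

def blochNorm (n : ℕ) (α : ℝ) (f : Cn n → ℂ) : ℝ := sSup (blochSet n α f)

def InBloch (n : ℕ) (α : ℝ) (f : Cn n → ℂ) : Prop :=
  Hol f ∧ BddAbove (blochSet n α f)

def Fint (n : ℕ) (p q s : ℝ) (f : Cn n → ℂ) (a : Cn n) : ℝ :=
  ∫ z in B n, ‖rderiv f z‖ ^ p * (1 - ‖z‖ ^ 2) ^ q * mob a z ^ s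

def FSet (n : ℕ) (p q s : ℝ) (f : Cn n → ℂ) : Set ℝ :=
  {x | ∃ a ∈ B n, x = Fint n p q s f a}

def FNorm (n : ℕ) (p q s : ℝ) (f : Cn n → ℂ) : ℝ := sSup (FSet n p q s f) ^ (1 / p)

def InF (n : ℕ) (p q s : ℝ) (f : Cn n → ℂ) : Prop :=
  Hol f ∧ BddAbove (FSet n p q s f)

def toeplitz (n : ℕ) (β : ℝ) (μ : Measure (Cn n)) (f : Cn n → ℂ) (z : Cn n) : ℂ :=
  ∫ w, f w / ((1 : ℂ) - bdot z w) ^ ((((n : ℝ) + 1 + β : ℝ)) : ℂ) ∂μ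

def carlSet (n : ℕ) (p q γ : ℝ) (μ : Measure (Cn n)) : Set ℝ :=
  {x | ∃ f : Cn n → ℂ, InBergman n p γ f ∧ bNorm n p γ f ≤ 1 ∧ x = ∫ z, ‖f z‖ ^ q ∂μ}

open Module Set

section JapaneseBracket

variable {W : Type*} [NormedAddCommGroup W] [NormedSpace ℝ W] [FiniteDimensional ℝ W]
  [MeasurableSpace W] [BorelSpace W] (ν : Measure W) [ν.IsAddHaarMeasure]

lemma lintegral_rpow_sq_add_norm_sq {r : ℝ} (hr : (finrank ℝ W : ℝ) < r) {b : ℝ} (hb : 0 < b) :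
    ∫⁻ w, ENNReal.ofReal ((b ^ 2 + ‖w‖ ^ 2) ^ (-r / 2)) ∂ν =
      ENNReal.ofReal (b ^ ((finrank ℝ W : ℝ) - r) * ∫ w, (1 + ‖w‖ ^ 2) ^ (-r / 2) ∂ν) := by
  have key : ∀ w : W, (b ^ 2 + ‖w‖ ^ 2) ^ (-r / 2) =
      b ^ (-r) * (1 + ‖b⁻¹ • w‖ ^ 2) ^ (-r / 2) := by
    intro w
    have h1 : b ^ 2 + ‖w‖ ^ 2 = b ^ 2 * (1 + ‖b⁻¹ • w‖ ^ 2) := by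
      rw [norm_smul, Real.norm_of_nonneg (by positivity)]
      field_simp
    rw [h1, Real.mul_rpow (by positivity) (by positivity), ← Real.rpow_natCast b 2,
      ← Real.rpow_mul hb.le]
    congr 2
    push_cast
    ring
  have hint := ((integrable_rpow_neg_one_add_norm_sq (μ := ν) hr).comp_smul
    (inv_ne_zero hb.ne')).const_mul (b ^ (-r))
  simp_rw [key]
  rw [← ofReal_integral_eq_lintegral_ofReal hint (ae_of_all _ fun w => by positivity),
    integral_const_mul,
    Measure.integral_comp_inv_smul ν (fun w : W => (1 + ‖w‖ ^ 2) ^ (-r / 2)) b,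
    abs_of_pos (by positivity), smul_eq_mul, ← mul_assoc, ← Real.rpow_natCast b,
    ← Real.rpow_add hb]
  congr 3
  ring

end JapaneseBracket

lemma lintegral_Ioi_rpow_mul_add_rpow_le {α γ d : ℝ} (hα : -1 < α) (hγ : 0 < γ) (hd : 0 < d) :
    ∫⁻ u in Ioi (0 : ℝ), ENNReal.ofReal (u ^ α * (d + u) ^ (-(1 + α + γ))) ≤
      ENNReal.ofReal (d ^ (-γ) * (1 / (1 + α) + 1 / γ)) := by
  rw [← Ioc_union_Ioi_eq_Ioi hd.le, mul_add, ENNReal.ofReal_add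
    (mul_nonneg (by positivity) (by simpa using (by linarith : (0:ℝ) ≤ 1 + α))) (by positivity)]
  refine (lintegral_union_le _ _ _).trans (add_le_add ?_ ?_)
  · have hint : IntegrableOn (fun u : ℝ => d ^ (-(1 + α + γ)) * u ^ α) (Ioc 0 d) :=
      ((intervalIntegral.intervalIntegrable_rpow' hα).1).const_mul _
    calc _ ≤ ∫⁻ u in Ioc (0 : ℝ) d, ENNReal.ofReal (d ^ (-(1 + α + γ)) * u ^ α) := by
          refine setLIntegral_mono' measurableSet_Ioc fun u hu => ENNReal.ofReal_le_ofReal ?_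
          rw [mul_comm]
          refine mul_le_mul_of_nonneg_right ?_ (Real.rpow_nonneg hu.1.le _)
          exact Real.rpow_le_rpow_of_nonpos hd (by linarith [hu.1]) (by linarith)
      _ = _ := by
          rw [← ofReal_integral_eq_lintegral_ofReal hint]
          · rw [integral_const_mul, ← intervalIntegral.integral_of_le hd.le,
              integral_rpow (Or.inl hα), Real.zero_rpow (by linarith), sub_zero, mul_div_assoc',
              ← Real.rpow_add hd, mul_one_div, add_comm α 1]
            congr 3
            ring
          · exact (ae_restrict_iff' measurableSet_Ioc).2 (ae_of_all _ fun u hu =>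
              mul_nonneg (by positivity) (Real.rpow_nonneg hu.1.le _))
  · have hint : IntegrableOn (fun u : ℝ => u ^ (-(1 + γ))) (Ioi d) :=
      integrableOn_Ioi_rpow_of_lt (by linarith) hd
    calc _ ≤ ∫⁻ u in Ioi d, ENNReal.ofReal (u ^ (-(1 + γ))) := by
          refine setLIntegral_mono' measurableSet_Ioi fun u hu => ENNReal.ofReal_le_ofReal ?_
          have hu0 : 0 < u := hd.trans hu
          calc _ ≤ u ^ α * u ^ (-(1 + α + γ)) :=
                mul_le_mul_of_nonneg_left
                  (Real.rpow_le_rpow_of_nonpos hu0 (by linarith) (by linarith)) (by positivity)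
            _ = _ := by
                rw [← Real.rpow_add hu0]
                congr 1
                ring
      _ = _ := by
          rw [← ofReal_integral_eq_lintegral_ofReal hint]
          · rw [integral_Ioi_rpow_of_lt (by linarith) hd]
            congr 1
            rw [show -(1 + γ) + 1 = -γ by ring]
            field_simp
          · exact (ae_restrict_iff' measurableSet_Ioi).2 (ae_of_all _ fun u hu =>
              Real.rpow_nonneg (hd.trans hu).le _)

lemma measurableSet_slice (R : ℝ) : MeasurableSet {x : ℝ | 1 / 2 < x ∧ x ^ 2 < R} := by
  have h1 : MeasurableSet {x : ℝ | x ^ 2 < R} := measurableSet_lt (by fun_prop) measurable_const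
  exact measurableSet_Ioi.inter h1

lemma lintegral_slice_rpow_le {α γ d : ℝ} (hα : -1 < α) (hγ : 0 < γ) (hd : 0 < d) (R : ℝ) :
    ∫⁻ x in {x : ℝ | 1 / 2 < x ∧ x ^ 2 < R},
      ENNReal.ofReal ((R - x ^ 2) ^ α * (d + (R - x ^ 2)) ^ (-(1 + α + γ))) ≤
      ENNReal.ofReal (d ^ (-γ) * (1 / (1 + α) + 1 / γ)) := by
  set s : Set ℝ := {x : ℝ | 1 / 2 < x ∧ x ^ 2 < R}
  set g : ℝ → ENNReal := fun u => ENNReal.ofReal (u ^ α * (d + u) ^ (-(1 + α + γ)))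
  have hs : MeasurableSet s := measurableSet_slice R
  have hderiv : ∀ x ∈ s, HasDerivWithinAt (fun x : ℝ => R - x ^ 2) (-(2 * x)) s x := by
    intro x _
    simpa using ((hasDerivAt_pow 2 x).const_sub R).hasDerivWithinAt
  have hinj : InjOn (fun x : ℝ => R - x ^ 2) s := by
    intro x hx y hy hxy
    have hx' := hx.1
    have hy' := hy.1
    have : x ^ 2 = y ^ 2 := by simpa using hxy
    exact (pow_left_inj₀ (by linarith) (by linarith) two_ne_zero).1 this
  calc ∫⁻ x in s, g (R - x ^ 2)
      ≤ ∫⁻ x in s, ENNReal.ofReal |-(2 * x)| * g (R - x ^ 2) := by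
        refine setLIntegral_mono' hs fun x hx => ?_
        refine le_mul_of_one_le_left zero_le ?_
        rw [ENNReal.one_le_ofReal, abs_neg, abs_of_pos (by linarith [hx.1])]
        linarith [hx.1]
    _ = ∫⁻ u in (fun x : ℝ => R - x ^ 2) '' s, g u :=
        (lintegral_image_eq_lintegral_abs_deriv_mul hs hderiv hinj g).symm
    _ ≤ ∫⁻ u in Ioi (0 : ℝ), g u := by
        refine lintegral_mono_set ?_
        rintro _ ⟨x, hx, rfl⟩
        exact sub_pos.2 hx.2
    _ ≤ _ := lintegral_Ioi_rpow_mul_add_rpow_le hα hγ hd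

/-- The region of the unit ball, in the coordinates `(w, y, x)`, where `1 / 2 < x`. -/
def ballCap (W : Type*) [Norm W] : Set (W × ℝ × ℝ) :=
  {v | 1 / 2 < v.2.2 ∧ v.2.2 ^ 2 + v.2.1 ^ 2 + ‖v.1‖ ^ 2 < 1}

section BallCap

variable {W : Type*} [NormedAddCommGroup W] [MeasurableSpace W] [BorelSpace W]

lemma measurableSet_ballCap : MeasurableSet (ballCap W) := by
  have h1 : MeasurableSet {v : W × ℝ × ℝ | 1 / 2 < v.2.2} :=
    measurableSet_lt measurable_const (by fun_prop)
  have h2 : MeasurableSet {v : W × ℝ × ℝ | v.2.2 ^ 2 + v.2.1 ^ 2 + ‖v.1‖ ^ 2 < 1} :=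
    measurableSet_lt (by fun_prop) measurable_const
  exact h1.inter h2

lemma lintegral_ballCap_le (ν : Measure W) [SFinite ν] {f : W → ENNReal} {g h : ℝ → ENNReal}
    (hf : Measurable f) (hg : Measurable g) (hh : Measurable h) {I : ENNReal}
    (hI : ∀ R : ℝ, ∫⁻ x in {x : ℝ | 1 / 2 < x ∧ x ^ 2 < R}, h (R - x ^ 2) ≤ I) :
    ∫⁻ v in ballCap W, f v.1 * (g v.2.1 * h (1 - (v.2.2 ^ 2 + v.2.1 ^ 2 + ‖v.1‖ ^ 2)))
      ∂(ν.prod volume) ≤ (∫⁻ w, f w ∂ν) * ((∫⁻ y, g y) * I) := by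
  set F : W × ℝ × ℝ → ENNReal := (ballCap W).indicator fun v =>
      f v.1 * (g v.2.1 * h (1 - (v.2.2 ^ 2 + v.2.1 ^ 2 + ‖v.1‖ ^ 2))) with hF
  have hm : Measurable F :=
    (by fun_prop : Measurable fun v : W × ℝ × ℝ =>
      f v.1 * (g v.2.1 * h (1 - (v.2.2 ^ 2 + v.2.1 ^ 2 + ‖v.1‖ ^ 2)))).indicator
      measurableSet_ballCap
  rw [← lintegral_indicator measurableSet_ballCap, lintegral_prod _ hm.aemeasurable,
    ← lintegral_mul_const _ hf]
  refine lintegral_mono fun w => ?_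
  rw [Measure.volume_eq_prod, lintegral_prod (fun v => F (w, v))
    (hm.comp measurable_prodMk_left).aemeasurable, ← lintegral_mul_const _ hg,
    ← lintegral_const_mul _ (by fun_prop)]
  refine lintegral_mono fun y => ?_
  refine le_trans ?_ (mul_le_mul_right (mul_le_mul_right (hI (1 - y ^ 2 - ‖w‖ ^ 2)) _) _)
  rw [← lintegral_const_mul _ (by fun_prop), ← lintegral_const_mul _ (by fun_prop),
    ← lintegral_indicator (measurableSet_slice _)]
  refine lintegral_mono fun x => ?_
  by_cases hx : (w, y, x) ∈ ballCap W
  · have hx' : x ∈ {x : ℝ | 1 / 2 < x ∧ x ^ 2 < 1 - y ^ 2 - ‖w‖ ^ 2} :=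
      ⟨hx.1, by linarith [hx.2]⟩
    simp only [hF, indicator_of_mem hx, indicator_of_mem hx']
    rw [show 1 - (x ^ 2 + y ^ 2 + ‖w‖ ^ 2) = 1 - y ^ 2 - ‖w‖ ^ 2 - x ^ 2 by ring]
  · simp [hF, indicator_of_notMem hx]

end BallCap

lemma exists_lintegral_ballCap_le {W : Type*} [NormedAddCommGroup W] [NormedSpace ℝ W]
    [FiniteDimensional ℝ W] [MeasurableSpace W] [BorelSpace W] (ν : Measure W)
    [ν.IsAddHaarMeasure] {α γ : ℝ} (hα : -1 < α)
    (hγ : 0 < γ) :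
    ∃ K : ℝ, ∀ d > 0, ∫⁻ v in ballCap W,
      ENNReal.ofReal ((d + ‖v.1‖ ^ 2) ^ (-((finrank ℝ W : ℝ) + 2 * γ) / 2)) *
      (ENNReal.ofReal ((d ^ 2 + v.2.1 ^ 2) ^ (-(1 + γ) / 2)) *
      ENNReal.ofReal ((1 - (v.2.2 ^ 2 + v.2.1 ^ 2 + ‖v.1‖ ^ 2)) ^ α *
        (d + (1 - (v.2.2 ^ 2 + v.2.1 ^ 2 + ‖v.1‖ ^ 2))) ^ (-(1 + α + γ))))
      ∂(ν.prod volume) ≤ ENNReal.ofReal (K * d ^ (-(3 * γ))) := by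
  refine ⟨(∫ w, (1 + ‖w‖ ^ 2) ^ (-((finrank ℝ W : ℝ) + 2 * γ) / 2) ∂ν) *
    (∫ y : ℝ, (1 + y ^ 2) ^ (-(1 + γ) / 2)) * (1 / (1 + α) + 1 / γ), fun d hd => ?_⟩
  have hα' : 0 < 1 + α := by linarith
  set J₁ := ∫ w, (1 + ‖w‖ ^ 2) ^ (-((finrank ℝ W : ℝ) + 2 * γ) / 2) ∂ν
  set J₂ := ∫ y : ℝ, (1 + y ^ 2) ^ (-(1 + γ) / 2)
  have hJ₁ : 0 ≤ J₁ := integral_nonneg fun w => by positivity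
  have hJ₂ : 0 ≤ J₂ := integral_nonneg fun w => by positivity
  set I := ENNReal.ofReal (d ^ (-γ) * (1 / (1 + α) + 1 / γ))
  have hw : ∫⁻ w, ENNReal.ofReal ((d + ‖w‖ ^ 2) ^ (-((finrank ℝ W : ℝ) + 2 * γ) / 2)) ∂ν =
      ENNReal.ofReal (d ^ (-γ) * J₁) := by
    have := lintegral_rpow_sq_add_norm_sq ν (r := (finrank ℝ W : ℝ) + 2 * γ) (by linarith)
      (Real.sqrt_pos.2 hd)
    rw [Real.sq_sqrt hd.le, Real.sqrt_eq_rpow, ← Real.rpow_mul hd.le] at this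
    rw [this]
    congr 3
    ring
  have hy : ∫⁻ y : ℝ, ENNReal.ofReal ((d ^ 2 + y ^ 2) ^ (-(1 + γ) / 2)) =
      ENNReal.ofReal (d ^ (-γ) * J₂) := by
    have := lintegral_rpow_sq_add_norm_sq (volume : Measure ℝ) (r := 1 + γ)
      (by simpa using hγ) hd
    simp only [finrank_self, Nat.cast_one] at this
    rw [show (1 : ℝ) - (1 + γ) = -γ by ring] at this
    simpa only [Real.norm_eq_abs, sq_abs] using this
  refine (lintegral_ballCap_le ν
    (f := fun w => ENNReal.ofReal ((d + ‖w‖ ^ 2) ^ (-((finrank ℝ W : ℝ) + 2 * γ) / 2)))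
    (g := fun y => ENNReal.ofReal ((d ^ 2 + y ^ 2) ^ (-(1 + γ) / 2)))
    (h := fun u => ENNReal.ofReal (u ^ α * (d + u) ^ (-(1 + α + γ))))
    (by fun_prop) (by fun_prop) (by fun_prop) (lintegral_slice_rpow_le hα hγ hd)).trans_eq ?_
  rw [hw, hy, ← ENNReal.ofReal_mul (by positivity), ← ENNReal.ofReal_mul (by positivity)]
  congr 1
  rw [show -(3 * γ) = -γ + (-γ + -γ) by ring, Real.rpow_add hd, Real.rpow_add hd]
  ring

lemma integrableOn_ball_one_sub_norm_sq_rpow {E : Type*} [NormedAddCommGroup E] [NormedSpace ℝ E]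
    [FiniteDimensional ℝ E] [Nontrivial E] [MeasurableSpace E] [BorelSpace E] (μ : Measure E)
    [μ.IsAddHaarMeasure] {α : ℝ} (hα : -1 < α) :
    IntegrableOn (fun z => (1 - ‖z‖ ^ 2) ^ α) (Metric.ball 0 1) μ := by
  rw [integrableOn_fun_norm_addHaar μ (f := fun y => (1 - y ^ 2) ^ α)]
  have h0 : IntervalIntegrable (fun y : ℝ => (1 - y) ^ α) volume 0 1 := by
    simpa using ((intervalIntegral.intervalIntegrable_rpow' (a := 0) (b := 1) hα).comp_sub_left
      1).symm
  have h1 : IntervalIntegrable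
      (fun y : ℝ => (1 - y) ^ α * (y ^ (finrank ℝ E - 1) * (1 + y) ^ α)) volume 0 1 := by
    refine h0.mul_continuousOn ?_
    refine (continuous_pow _).continuousOn.mul ?_
    refine ContinuousOn.rpow_const (by fun_prop) fun y hy => Or.inl ?_
    rw [uIcc_of_le zero_le_one] at hy
    linarith [hy.1]
  refine (((intervalIntegrable_iff_integrableOn_Ioc_of_le zero_le_one).1 h1).mono_set
    Ioo_subset_Ioc_self).congr_fun (fun y hy => ?_) measurableSet_Ioo
  have hy1 : 0 ≤ 1 - y := by linarith [hy.2]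
  have hy0 : 0 ≤ 1 + y := by linarith [hy.1]
  dsimp only
  rw [show 1 - y ^ 2 = (1 - y) * (1 + y) by ring, Real.mul_rpow hy1 hy0, smul_eq_mul]
  ring

lemma kernel_rpow_le {r x y ω α γ M : ℝ} (hr0 : 0 ≤ r) (hr1 : r < 1) (hω : 0 ≤ ω)
    (hball : x ^ 2 + y ^ 2 + ω < 1) (hα : -1 < α) (hγ : 0 < γ) (hM : 0 ≤ M)
    (hD : ‖(1 : ℂ) - r * (⟨x, y⟩ : ℂ)‖ < 1 / 2) :
    1 / 2 < x ∧ ‖(1 : ℂ) - r * (⟨x, y⟩ : ℂ)‖ ^ (-(M / 2 + 2 + α + 3 * γ)) ≤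
      4 ^ (M / 2 + 2 + α + 3 * γ) *
        ((1 - r ^ 2 + ω) ^ (-(M + 2 * γ) / 2) * (((1 - r ^ 2) ^ 2 + y ^ 2) ^ (-(1 + γ) / 2) *
          (1 - r ^ 2 + (1 - (x ^ 2 + y ^ 2 + ω))) ^ (-(1 + α + γ)))) := by
  set D := ‖(1 : ℂ) - r * (⟨x, y⟩ : ℂ)‖ with hDdef
  set s := ‖(⟨x, y⟩ : ℂ)‖ with hs
  have hs0 : 0 ≤ s := norm_nonneg _
  have hs2 : s ^ 2 = x ^ 2 + y ^ 2 := by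
    rw [hs, Complex.sq_norm, Complex.normSq_mk]
    ring
  have hs1 : s < 1 := by nlinarith
  have hre : 1 - r * x ≤ D := by
    simpa using Complex.re_le_norm ((1 : ℂ) - r * (⟨x, y⟩ : ℂ))
  have him : r * |y| ≤ D := by
    simpa [abs_mul, abs_of_nonneg hr0] using Complex.abs_im_le_norm ((1 : ℂ) - r * (⟨x, y⟩ : ℂ))
  have hrs : 1 - r * s ≤ D := by
    have := norm_sub_norm_le (1 : ℂ) (r * (⟨x, y⟩ : ℂ))
    simpa [abs_of_nonneg hr0, ← hs] using this
  have hxs : x ≤ s := Complex.re_le_norm (⟨x, y⟩ : ℂ)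
  have hx : 1 / 2 < x := by nlinarith
  have hr : 1 / 2 < r := by nlinarith
  have hd : 0 < 1 - r ^ 2 := by nlinarith
  have h1 : 1 - r ^ 2 ≤ 2 * D := by nlinarith
  have h2 : 1 - s ^ 2 ≤ 2 * D := by nlinarith
  have h3 : |y| ≤ 2 * D := by nlinarith [abs_nonneg y]
  have hD0 : 0 < D := by linarith
  refine ⟨hx, ?_⟩
  have e1 : (4 * D) ^ (-(M + 2 * γ) / 2) ≤ (1 - r ^ 2 + ω) ^ (-(M + 2 * γ) / 2) :=
    Real.rpow_le_rpow_of_nonpos (by linarith) (by nlinarith) (by linarith)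
  have e2 : (4 * D) ^ (-(1 + γ)) ≤ ((1 - r ^ 2) ^ 2 + y ^ 2) ^ (-(1 + γ) / 2) := by
    have hsq : (4 * D) ^ (-(1 + γ)) = ((4 * D) ^ 2) ^ (-(1 + γ) / 2) := by
      rw [← Real.rpow_natCast, ← Real.rpow_mul (by positivity)]
      congr 1
      push_cast
      ring
    rw [hsq]
    refine Real.rpow_le_rpow_of_nonpos (by positivity) ?_ (by linarith)
    have k1 := pow_le_pow_left₀ hd.le h1 2
    have k2 := pow_le_pow_left₀ (abs_nonneg y) h3 2
    rw [sq_abs] at k2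
    linarith [sq_nonneg D]
  have e3 : (4 * D) ^ (-(1 + α + γ)) ≤
      (1 - r ^ 2 + (1 - (x ^ 2 + y ^ 2 + ω))) ^ (-(1 + α + γ)) :=
    Real.rpow_le_rpow_of_nonpos (by linarith) (by linarith) (by linarith)
  have hsplit : D ^ (-(M / 2 + 2 + α + 3 * γ)) = 4 ^ (M / 2 + 2 + α + 3 * γ) *
      ((4 * D) ^ (-(M + 2 * γ) / 2) * ((4 * D) ^ (-(1 + γ)) * (4 * D) ^ (-(1 + α + γ)))) := by
    rw [← Real.rpow_add (by positivity), ← Real.rpow_add (by positivity),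
      show -(M + 2 * γ) / 2 + (-(1 + γ) + -(1 + α + γ)) = -(M / 2 + 2 + α + 3 * γ) by ring,
      Real.mul_rpow (by norm_num) hD0.le, ← mul_assoc, ← Real.rpow_add (by norm_num)]
    simp
  rw [hsplit]
  gcongr

instance (n : ℕ) : (volume : Measure (Cn n)).IsAddHaarMeasure :=
  inferInstanceAs (Measure.addHaar.IsAddHaarMeasure)

lemma bdot_eq_inner {n : ℕ} (z w : Cn n) : bdot z w = inner ℂ w z := by
  simp [bdot, PiLp.inner_apply]

/-- Splitting off the first complex coordinate of `Cn (m + 1)`. -/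
def splitCoord (m : ℕ) : Cn (m + 1) ≃ₗ[ℝ] Cn m × ℝ × ℝ where
  toFun z := (WithLp.toLp 2 fun i => z i.succ, (z 0).im, (z 0).re)
  invFun v := WithLp.toLp 2 (Fin.cons ⟨v.2.2, v.2.1⟩ fun i => v.1 i)
  map_add' z w := by ext <;> simp
  map_smul' c z := by ext <;> simp
  left_inv z := by
    ext i
    refine Fin.cases ?_ (fun j => ?_) i <;> simp
  right_inv v := by simp

lemma exists_coordinates (m : ℕ) : ∃ c : ENNReal, c ≠ ⊤ ∧ ∀ e : Cn (m + 1), ‖e‖ = 1 →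
    ∃ Φ : Cn (m + 1) ≃L[ℝ] Cn m × ℝ × ℝ,
      (∀ z, bdot z e = ⟨(Φ z).2.2, (Φ z).2.1⟩) ∧
      (∀ z, ‖z‖ ^ 2 = (Φ z).2.2 ^ 2 + (Φ z).2.1 ^ 2 + ‖(Φ z).1‖ ^ 2) ∧
      Measure.map Φ volume = c • (volume : Measure (Cn m)).prod volume := by
  set π : Measure (Cn m × ℝ × ℝ) := (volume : Measure (Cn m)).prod volume
  set U : Set (Cn m × ℝ × ℝ) := {v | v.2.2 ^ 2 + v.2.1 ^ 2 + ‖v.1‖ ^ 2 < 1}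
  have hUo : IsOpen U := isOpen_lt (by fun_prop) (by fun_prop)
  have hU0 : π U ≠ 0 := (hUo.measure_pos π ⟨0, by simp [U]⟩).ne'
  refine ⟨volume (B (m + 1)) / π U, ENNReal.div_ne_top measure_ball_lt_top.ne hU0, fun e he => ?_⟩
  obtain ⟨b, hb⟩ := Orthonormal.exists_orthonormalBasis_extension_of_card_eq (𝕜 := ℂ)
    (E := Cn (m + 1)) (ι := Fin (m + 1)) (by simp) (v := fun _ => e) (s := {0})
    ⟨fun _ => he, fun i j hij => (hij (Subsingleton.elim i j)).elim⟩
  set Φ : Cn (m + 1) ≃L[ℝ] Cn m × ℝ × ℝ :=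
    ((b.repr.toLinearEquiv.restrictScalars ℝ).trans (splitCoord m)).toContinuousLinearEquiv
  have hΦ : ∀ z, Φ z = splitCoord m (b.repr z) := fun z => rfl
  have hnorm : ∀ z, ‖z‖ ^ 2 = (Φ z).2.2 ^ 2 + (Φ z).2.1 ^ 2 + ‖(Φ z).1‖ ^ 2 := by
    intro z
    rw [← b.repr.norm_map z, EuclideanSpace.norm_sq_eq, EuclideanSpace.norm_sq_eq,
      Fin.sum_univ_succ, Complex.sq_norm, Complex.normSq_apply, hΦ]
    simp [splitCoord, sq]
  refine ⟨Φ, fun z => ?_, hnorm, ?_⟩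
  · rw [bdot_eq_inner, ← hb 0 rfl, ← b.repr_apply_apply, hΦ]
    rfl
  · have hpre : Φ ⁻¹' U = B (m + 1) := by
      ext z
      simp only [U, B, mem_preimage, mem_ofPred_eq, ← hnorm, mem_ball_zero_iff]
      rw [sq_lt_one_iff₀ (norm_nonneg _)]
    have hHaar : (Measure.map Φ volume).IsAddHaarMeasure := Φ.isAddHaarMeasure_map volume
    have hsmul := Measure.isAddLeftInvariant_eq_smul (Measure.map Φ volume) π
    set k := (Measure.map Φ volume).addHaarScalarFactor π
    have hval : volume (B (m + 1)) = k * π U := by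
      rw [← hpre, ← Measure.map_apply Φ.continuous.measurable hUo.measurableSet, hsmul]
      rfl
    have hUt : π U ≠ ⊤ := by
      intro htop
      rw [htop] at hval
      have hk : (k : ENNReal) ≠ 0 := fun hk => by
        rw [hk, zero_mul] at hval
        exact (Metric.measure_ball_pos volume (0 : Cn (m + 1)) one_pos).ne' hval
      rw [ENNReal.mul_top hk] at hval
      exact measure_ball_lt_top.ne hval
    rw [hval, ENNReal.mul_div_cancel_right hU0 hUt]
    exact hsmul

lemma finrank_real_Cn (n : ℕ) : (finrank ℝ (Cn n) : ℝ) = 2 * n := by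
  have h := finrank_mul_finrank ℝ ℂ (Cn n)
  rw [Complex.finrank_real_complex, finrank_euclideanSpace_fin] at h
  exact_mod_cast h.symm

lemma measurableSet_B (n : ℕ) : MeasurableSet (B n) := measurableSet_ball

lemma norm_lt_one_of_mem_B {n : ℕ} {z : Cn n} (hz : z ∈ B n) : ‖z‖ < 1 := by
  simpa [B] using hz

lemma one_sub_norm_sq_pos {n : ℕ} {z : Cn n} (hz : z ∈ B n) : 0 < 1 - ‖z‖ ^ 2 := by
  have := norm_lt_one_of_mem_B hz
  nlinarith [norm_nonneg z]

lemma continuous_bdot_left {n : ℕ} (a : Cn n) : Continuous fun z : Cn n => bdot z a := by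
  unfold bdot
  fun_prop

/-- The Forelli-Rudin estimate for the kernel of order `n + 1 + α + c`, with `n = m + 1`. -/
lemma exists_lintegral_kernel_le (m : ℕ) {α c : ℝ} (hα : -1 < α) (hc : 0 < c) :
    ∃ K : ENNReal, K ≠ ⊤ ∧ ∀ a ∈ B (m + 1), ∫⁻ z in B (m + 1),
      ENNReal.ofReal ((1 - ‖z‖ ^ 2) ^ α *
        ((1 - ‖a‖ ^ 2) ^ c * ‖(1 : ℂ) - bdot z a‖ ^ (-(((m + 1 : ℕ) : ℝ) + 1 + α + c)))) ≤ K := by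
  obtain ⟨γ, rfl⟩ : ∃ γ, c = 3 * γ := ⟨c / 3, by ring⟩
  have hγ : 0 < γ := by linarith
  obtain ⟨κ, hκ, hcoord⟩ := exists_coordinates m
  obtain ⟨K, hK⟩ := exists_lintegral_ballCap_le (volume : Measure (Cn m)) hα hγ
  set M : ℝ := (finrank ℝ (Cn m) : ℝ) with hMdef
  have hM : 0 ≤ M := Nat.cast_nonneg _
  set N : ℝ := M / 2 + 2 + α + 3 * γ with hN
  have hN' : ((m + 1 : ℕ) : ℝ) + 1 + α + 3 * γ = N := by
    rw [hN, hMdef, finrank_real_Cn]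
    push_cast
    ring
  have hN0 : 0 < N := by linarith
  have hP := ((integrableOn_ball_one_sub_norm_sq_rpow (volume : Measure (Cn (m + 1))) hα).const_mul
    (2 ^ N)).lintegral_lt_top.ne
  set P : Cn (m + 1) → ENNReal := fun z => ENNReal.ofReal (2 ^ N * (1 - ‖z‖ ^ 2) ^ α)
  refine ⟨(∫⁻ z in B (m + 1), P z) + κ * ENNReal.ofReal (4 ^ N * K),
    ENNReal.add_ne_top.2 ⟨hP, ENNReal.mul_ne_top hκ ENNReal.ofReal_ne_top⟩, fun a ha => ?_⟩
  rw [hN']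
  obtain ⟨e, he, hae⟩ : ∃ e : Cn (m + 1), ‖e‖ = 1 ∧ a = (‖a‖ : ℝ) • e := by
    by_cases h0 : a = 0
    · obtain ⟨e, he⟩ := exists_norm_eq (Cn (m + 1)) zero_le_one
      exact ⟨e, he, by simp [h0]⟩
    · have h0' : ‖a‖ ≠ 0 := norm_ne_zero_iff.2 h0
      exact ⟨‖a‖⁻¹ • a, by rw [norm_smul]; simp [h0'],
        by rw [smul_smul, mul_inv_cancel₀ h0', one_smul]⟩
  obtain ⟨Φ, hΦdot, hΦnorm, hΦmap⟩ := hcoord e he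
  have hr1 := norm_lt_one_of_mem_B ha
  have hd := one_sub_norm_sq_pos ha
  have hd1 : 1 - ‖a‖ ^ 2 ≤ 1 := by linarith [sq_nonneg ‖a‖]
  set r := ‖a‖ with hr
  have hr0 : 0 ≤ r := norm_nonneg a
  have hdot : ∀ z, bdot z a = r * (⟨(Φ z).2.2, (Φ z).2.1⟩ : ℂ) := by
    intro z
    rw [← hΦdot, hae, bdot_eq_inner, bdot_eq_inner, ← Complex.coe_smul, inner_smul_left]
    simp
  set H : Cn m × ℝ × ℝ → ENNReal := fun v =>
    ENNReal.ofReal ((1 - r ^ 2 + ‖v.1‖ ^ 2) ^ (-(M + 2 * γ) / 2)) *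
      (ENNReal.ofReal (((1 - r ^ 2) ^ 2 + v.2.1 ^ 2) ^ (-(1 + γ) / 2)) *
      ENNReal.ofReal ((1 - (v.2.2 ^ 2 + v.2.1 ^ 2 + ‖v.1‖ ^ 2)) ^ α *
        (1 - r ^ 2 + (1 - (v.2.2 ^ 2 + v.2.1 ^ 2 + ‖v.1‖ ^ 2))) ^ (-(1 + α + γ))))
  have hH : Measurable H := by fun_prop
  have hpre : MeasurableSet (Φ ⁻¹' ballCap (Cn m)) :=
    Φ.continuous.measurable measurableSet_ballCap
  set A : ENNReal := ENNReal.ofReal (4 ^ N * (1 - r ^ 2) ^ (3 * γ))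
  have hpt : ∀ z ∈ B (m + 1), ENNReal.ofReal ((1 - ‖z‖ ^ 2) ^ α *
        ((1 - r ^ 2) ^ (3 * γ) * ‖(1 : ℂ) - bdot z a‖ ^ (-N))) ≤
      P z + (Φ ⁻¹' ballCap (Cn m)).indicator (fun z => A * H (Φ z)) z := by
    intro z hz
    have hu := one_sub_norm_sq_pos hz
    by_cases hD : ‖(1 : ℂ) - bdot z a‖ < 1 / 2
    · refine le_add_of_le_right ?_
      rw [hdot] at hD ⊢
      have hball : (Φ z).2.2 ^ 2 + (Φ z).2.1 ^ 2 + ‖(Φ z).1‖ ^ 2 < 1 := by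
        rw [← hΦnorm]; linarith
      obtain ⟨hx, hle⟩ := kernel_rpow_le hr0 hr1 (sq_nonneg ‖(Φ z).1‖) hball hα hγ hM hD
      rw [indicator_of_mem (show z ∈ Φ ⁻¹' ballCap (Cn m) from ⟨hx, hball⟩)]
      rw [hΦnorm z] at hu ⊢
      simp only [A, H]
      rw [← ENNReal.ofReal_mul (by positivity), ← ENNReal.ofReal_mul (by positivity),
        ← ENNReal.ofReal_mul (by positivity)]
      refine ENNReal.ofReal_le_ofReal ?_
      rw [← hN] at hle
      refine (mul_le_mul_of_nonneg_left (mul_le_mul_of_nonneg_left hle (by positivity))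
        (by positivity)).trans_eq ?_
      ring
    · refine le_add_of_le_left (ENNReal.ofReal_le_ofReal ?_)
      rw [not_lt] at hD
      have h1 : ‖(1 : ℂ) - bdot z a‖ ^ (-N) ≤ 2 ^ N := by
        refine (Real.rpow_le_rpow_of_nonpos (by norm_num) hD (by linarith)).trans_eq ?_
        rw [one_div, Real.inv_rpow (by norm_num), Real.rpow_neg (by norm_num), inv_inv]
      have h2 : (1 - r ^ 2) ^ (3 * γ) ≤ 1 := Real.rpow_le_one hd.le hd1 hc.le
      rw [mul_comm]
      refine mul_le_mul_of_nonneg_right ?_ (by positivity)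
      exact (mul_le_of_le_one_left (by positivity) h2).trans h1
  calc _ ≤ ∫⁻ z in B (m + 1),
        (P z + (Φ ⁻¹' ballCap (Cn m)).indicator (fun z => A * H (Φ z)) z) :=
        setLIntegral_mono' (measurableSet_B _) hpt
    _ = (∫⁻ z in B (m + 1), P z) +
        ∫⁻ z in B (m + 1), (Φ ⁻¹' ballCap (Cn m)).indicator (fun z => A * H (Φ z)) z :=
        lintegral_add_left (by fun_prop) _
    _ ≤ _ := by
        gcongr
        calc _ ≤ ∫⁻ z, (Φ ⁻¹' ballCap (Cn m)).indicator (fun z => A * H (Φ z)) z :=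
              setLIntegral_le_lintegral _ _
          _ = A * ∫⁻ v in ballCap (Cn m), H v ∂(Measure.map Φ volume) := by
              rw [lintegral_indicator hpre,
                lintegral_const_mul (f := fun z => H (Φ z)) A (hH.comp Φ.continuous.measurable),
                setLIntegral_map measurableSet_ballCap hH Φ.continuous.measurable]
          _ = A * (κ * ∫⁻ v in ballCap (Cn m), H v ∂(volume.prod volume)) := by
              rw [hΦmap, Measure.restrict_smul, lintegral_smul_measure, smul_eq_mul]
          _ ≤ A * (κ * ENNReal.ofReal (K * (1 - r ^ 2) ^ (-(3 * γ)))) := by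
              gcongr
              exact hK _ hd
          _ = _ := by
              rw [mul_left_comm, ← ENNReal.ofReal_mul (by positivity)]
              congr 2
              rw [Real.rpow_neg hd.le]
              field_simp

lemma one_sub_bdot_mem_slitPlane {n : ℕ} {z a : Cn n} (hz : z ∈ B n) (ha : a ∈ B n) :
    (1 : ℂ) - bdot z a ∈ Complex.slitPlane := by
  refine Or.inl ?_
  have h1 : ‖bdot z a‖ ≤ ‖a‖ * ‖z‖ := by
    rw [bdot_eq_inner]
    exact norm_inner_le_norm a z
  have h2 := Complex.re_le_norm (bdot z a)
  have h3 : ‖a‖ * ‖z‖ < 1 :=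
    mul_lt_one_of_nonneg_of_lt_one_left (norm_nonneg _) (norm_lt_one_of_mem_B ha)
      (norm_lt_one_of_mem_B hz).le
  simp only [Complex.sub_re, Complex.one_re]
  linarith

/-- The test function of the Bergman space attached to the point `a`. -/
def testFun {n : ℕ} (β N : ℝ) (a z : Cn n) : ℂ :=
  (((1 - ‖a‖ ^ 2) ^ β : ℝ) : ℂ) * ((1 : ℂ) - bdot z a) ^ ((-N : ℝ) : ℂ)

lemma norm_testFun_rpow {n : ℕ} (β N q : ℝ) {a : Cn n} (ha : a ∈ B n) (z : Cn n) :
    ‖testFun β N a z‖ ^ q =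
      (1 - ‖a‖ ^ 2) ^ (β * q) * ‖(1 : ℂ) - bdot z a‖ ^ (-(N * q)) := by
  have hd := one_sub_norm_sq_pos ha
  rw [testFun, norm_mul, Complex.norm_cpow_real, Complex.norm_real,
    Real.norm_of_nonneg (by positivity), Real.mul_rpow (by positivity) (by positivity),
    ← Real.rpow_mul hd.le, ← Real.rpow_mul (norm_nonneg _), neg_mul]

lemma hol_testFun {n : ℕ} (β N : ℝ) {a : Cn n} (ha : a ∈ B n) : Hol (testFun β N a) := by
  intro z hz
  have hdot : Differentiable ℂ fun z : Cn n => bdot z a := by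
    simp_rw [bdot_eq_inner]
    exact (innerSL ℂ a).differentiable
  refine (DifferentiableAt.const_mul ?_ _).differentiableWithinAt
  exact ((differentiableAt_const _).sub hdot.differentiableAt).cpow_const
    (one_sub_bdot_mem_slitPlane hz ha)

lemma measurable_testFun {n : ℕ} (β N : ℝ) (a : Cn n) : Measurable (testFun β N a) := by
  have := (continuous_bdot_left a).measurable
  unfold testFun
  fun_prop

lemma exists_bNorm_testFun_le (m : ℕ) {p α β : ℝ} (hp : 0 < p) (hα : -1 < α) (hβ : 0 < β) :
    ∃ K : ℝ, ∀ a ∈ B (m + 1),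
      InBergman (m + 1) p α (testFun β ((((m + 1 : ℕ) : ℝ) + 1 + α) / p + β) a) ∧
      bNorm (m + 1) p α (testFun β ((((m + 1 : ℕ) : ℝ) + 1 + α) / p + β) a) ≤ K := by
  obtain ⟨K, hK, hKa⟩ := exists_lintegral_kernel_le m hα (mul_pos hβ hp)
  refine ⟨K.toReal ^ (1 / p), fun a ha => ?_⟩
  set f := testFun β ((((m + 1 : ℕ) : ℝ) + 1 + α) / p + β) a with hf
  have hmeas : Measurable fun z => ‖f z‖ ^ p :=
    (measurable_testFun _ _ a).norm.pow_const p
  have hle : ∫⁻ z, ENNReal.ofReal (‖f z‖ ^ p) ∂(vol (m + 1) α) ≤ K := by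
    rw [vol, lintegral_withDensity_eq_lintegral_mul _ (by fun_prop) (by fun_prop)]
    refine (setLIntegral_congr_fun (measurableSet_B _) fun z hz => ?_).trans_le (hKa a ha)
    have hu := one_sub_norm_sq_pos hz
    rw [Pi.mul_apply, ← ENNReal.ofReal_mul (by positivity), hf, norm_testFun_rpow _ _ _ ha,
      add_mul, div_mul_cancel₀ _ hp.ne']
  have hnn : 0 ≤ᵐ[vol (m + 1) α] fun z => ‖f z‖ ^ p := ae_of_all _ fun z => by positivity
  refine ⟨⟨hol_testFun _ _ ha, hmeas.aestronglyMeasurable, ?_⟩, ?_⟩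
  · rw [hasFiniteIntegral_iff_ofReal hnn]
    exact hle.trans_lt hK.lt_top
  · rw [bNorm, integral_eq_lintegral_of_nonneg_ae hnn hmeas.aestronglyMeasurable]
    exact Real.rpow_le_rpow ENNReal.toReal_nonneg (ENNReal.toReal_mono hK hle) (by positivity)

theorem stmt14 (n : ℕ) (p q s t α : ℝ) (hp : 0 < p) (hq : 0 < q) (hs : 0 < s)
    (ht : 0 < t) (hα : -1 < α) (μ : MeasureTheory.Measure (Cn n))
    (C : ℝ) (hC : 0 < C)
    (h : ∀ f : Cn n → ℂ, InBergman n p α f → ∀ a ∈ B n,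
      ∫ z, ‖f z‖ ^ q * ((1 - ‖a‖ ^ 2) ^ t / ‖(1 : ℂ) - bdot z a‖ ^ (s + t)) ∂μ ≤
        C * bNorm n p α f ^ q) :
    ∀ t₁ > 0, ∃ M, ∀ a ∈ B n,
      ∫ z, (1 - ‖a‖ ^ 2) ^ (t + t₁) /
        ‖(1 : ℂ) - bdot z a‖ ^ (s + ((n : ℝ) + 1 + α) * q / p + t + t₁) ∂μ ≤ M := by
  intro t₁ ht₁
  rcases n with _ | m
  · exact ⟨_, fun a _ => by rw [Subsingleton.elim a 0]⟩
  have hβ : 0 < t₁ / q := div_pos ht₁ hq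
  obtain ⟨K, hK⟩ := exists_bNorm_testFun_le m hp hα hβ
  refine ⟨C * K ^ q, fun a ha => ?_⟩
  obtain ⟨hmem, hle⟩ := hK a ha
  have hd := one_sub_norm_sq_pos ha
  refine le_trans (le_of_eq ?_) ((h _ hmem a ha).trans ?_)
  · congr 1
    ext z
    have hexp : ((((m + 1 : ℕ) : ℝ) + 1 + α) / p + t₁ / q) * q =
        (((m + 1 : ℕ) : ℝ) + 1 + α) * q / p + t₁ := by field_simp
    rw [norm_testFun_rpow _ _ _ ha, div_mul_cancel₀ _ hq.ne', hexp, Real.rpow_add hd]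
    have hpos : 0 < ((m + 1 : ℕ) : ℝ) + 1 + α := by
      have : (0 : ℝ) ≤ ((m + 1 : ℕ) : ℝ) := Nat.cast_nonneg _
      linarith
    have hE : 0 < (((m + 1 : ℕ) : ℝ) + 1 + α) * q / p := by positivity
    set E : ℝ := (((m + 1 : ℕ) : ℝ) + 1 + α) * q / p
    rcases (norm_nonneg ((1 : ℂ) - bdot z a)).eq_or_lt with h0 | h0
    · rw [← h0, Real.zero_rpow (by positivity),
        Real.zero_rpow (neg_ne_zero.2 (by positivity))]
      simp
    · rw [Real.rpow_neg h0.le, show s + E + t + t₁ = (E + t₁) + (s + t) by ring,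
        Real.rpow_add h0]
      field_simp
  · refine mul_le_mul_of_nonneg_left (Real.rpow_le_rpow ?_ hle hq.le) hC.le
    exact Real.rpow_nonneg (integral_nonneg fun z => by positivity) _
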